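/- arXiv:0805.0330 — 2 statements merged into one kernel-verified Lean document; each statement's English description precedes it below -/
import Mathlib

section
/- For every ATRA₁ 𝒜 with alphabet Σ, the language L^saf(𝒜) is a safety language, i.e., a closed subset of the metric space of all data trees with alphabet Σ, and L^cos(𝒜) is a co-safety language, i.e., an open subset. Equivalently: for any data tree τ, if for every l > 0 there exists τ'_l ∈ L^saf(𝒜) whose l-prefix equals the l-prefix of τ, then τ ∈ L^saf(𝒜). -/
/-! ## Trees and data trees -/

abbrev Node : Type := List Bool

/-- A (possibly infinite) data tree over alphabet `A`, with data from `ℕ`.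
It is represented by the partial labelling functions on nonleaf nodes:
`label n = some a` iff `n` is a nonleaf node labelled `a`, and similarly
`dlabel` gives the datum at each nonleaf node. -/
structure DataTree (A : Type) where
  label : Node → Option A
  dlabel : Node → Option ℕ
  root_nonleaf : (label []).isSome
  domain_eq : ∀ n : Node, (dlabel n).isSome ↔ (label n).isSome
  tree_cond : ∀ (n : Node) (d : Bool), (label (n ++ [d])).isSome → (label n).isSome

namespace DataTree
variable {A : Type}

def Nonleaf (τ : DataTree A) (n : Node) : Prop := (τ.label n).isSome

/-- The set of nodes: the root together with both children of every nonleaf node. -/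
def Nodes (τ : DataTree A) : Set Node :=
  {n | n = [] ∨ ∃ m d, n = m ++ [d] ∧ τ.Nonleaf m}

def Leaf (τ : DataTree A) (n : Node) : Prop := n ∈ τ.Nodes ∧ ¬ τ.Nonleaf n

def Finite (τ : DataTree A) : Prop := {n | τ.Nonleaf n}.Finite

end DataTree

/-- A (possibly infinite) tree over alphabet `A` (a data tree without data). -/
structure BTree (A : Type) where
  label : Node → Option A
  root_nonleaf : (label []).isSome
  tree_cond : ∀ (n : Node) (d : Bool), (label (n ++ [d])).isSome → (label n).isSome

namespace BTree
variable {A : Type}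
def Nonleaf (t : BTree A) (n : Node) : Prop := (t.label n).isSome
def Nodes (t : BTree A) : Set Node :=
  {n | n = [] ∨ ∃ m d, n = m ++ [d] ∧ t.Nonleaf m}
def Leaf (t : BTree A) (n : Node) : Prop := n ∈ t.Nodes ∧ ¬ t.Nonleaf n
def Finite (t : BTree A) : Prop := {n | t.Nonleaf n}.Finite
end BTree

/-- The underlying tree of a data tree (erasing the data). -/
def DataTree.toTree {A : Type} (τ : DataTree A) : BTree A :=
  ⟨τ.label, τ.root_nonleaf, τ.tree_cond⟩

/-- `τ` and `τ'` have equal `l`-prefixes: they agree on all nodes of length `< l`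
(hence their restrictions to nodes of length `≤ l` coincide). -/
def EqPrefix {A : Type} (τ τ' : DataTree A) (l : ℕ) : Prop :=
  ∀ n : Node, n.length < l → τ.label n = τ'.label n ∧ τ.dlabel n = τ'.dlabel n

open Classical in
/-- The distance between data trees: `0` if they are equal, and otherwise `1/l`
where `l` is least such that the `l`-prefixes are distinct. -/
noncomputable def treeDist {A : Type} (τ τ' : DataTree A) : ℝ :=
  if τ = τ' then 0 else ((sInf {l : ℕ | ¬ EqPrefix τ τ' l} : ℕ) : ℝ)⁻¹

/-! ## Forward alternating tree 1-register automata (ATRA₁) -/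

/-- Positive Boolean formulae over `Q`: atoms `q(d, ↓)` / `q(d, ¬↓)` are
`atom q d true` / `atom q d false`, where `d : Bool` is the direction. -/
inductive PosBool (Q : Type) : Type
  | atom : Q → Bool → Bool → PosBool Q
  | tt : PosBool Q
  | ff : PosBool Q
  | and : PosBool Q → PosBool Q → PosBool Q
  | or : PosBool Q → PosBool Q → PosBool Q

/-- Satisfaction of a positive Boolean formula by a quadruple
`R d u` of subsets of `Q` (`d` = direction, `u = true` means register update `↓`). -/
def PosBool.Sat {Q : Type} (R : Bool → Bool → Set Q) : PosBool Q → Prop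
  | .atom q d u => q ∈ R d u
  | .tt => True
  | .ff => False
  | .and φ ψ => φ.Sat R ∧ ψ.Sat R
  | .or φ ψ => φ.Sat R ∨ ψ.Sat R

/-- The dual of a positive Boolean formula: swaps `⊤`/`⊥` and `∧`/`∨`. -/
def PosBool.dual {Q : Type} : PosBool Q → PosBool Q
  | .atom q d u => .atom q d u
  | .tt => .ff
  | .ff => .tt
  | .and φ ψ => .or φ.dual ψ.dual
  | .or φ ψ => .and φ.dual ψ.dual

def PosBool.map {Q Q' : Type} (f : Q → Q') : PosBool Q → PosBool Q'
  | .atom q d u => .atom (f q) d u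
  | .tt => .tt
  | .ff => .ff
  | .and φ ψ => .and (φ.map f) (ψ.map f)
  | .or φ ψ => .or (φ.map f) (ψ.map f)

/-- A forward alternating tree 1-register automaton. -/
structure ATRA (A : Type) where
  Q : Type
  fin : Finite Q
  qI : Q
  F : Set Q
  δ : Q → A → Bool → PosBool Q

namespace ATRA
variable {A : Type}

/-- The transition relation between configurations (finite sets of threads),
relative to a letter `a` and a datum `E`. -/
def Trans (M : ATRA A) (a : A) (E : ℕ) (G H0 H1 : Set (M.Q × ℕ)) : Prop :=
  ∀ q D, (q, D) ∈ G →
    ∃ R : Bool → Bool → Set M.Q,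
      (M.δ q a (decide (D = E))).Sat R ∧
      ∀ d : Bool,
        (∀ r ∈ R d true, (r, E) ∈ (if d then H1 else H0)) ∧
        (∀ r ∈ R d false, (r, D) ∈ (if d then H1 else H0))

/-- A run of `M` on a data tree `τ`. -/
structure Run (M : ATRA A) (τ : DataTree A) where
  G : Node → Set (M.Q × ℕ)
  finite : ∀ n : Node, (G n).Finite
  support : ∀ n : Node, n ∉ τ.Nodes → G n = ∅
  init : ∃ D : ℕ, τ.dlabel [] = some D ∧ (M.qI, D) ∈ G []
  step : ∀ (n : Node) (a : A) (D : ℕ), τ.label n = some a → τ.dlabel n = some D →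
    M.Trans a D (G n) (G (n ++ [false])) (G (n ++ [true]))

def Run.Final {M : ATRA A} {τ : DataTree A} (ρ : M.Run τ) : Prop :=
  ∀ n, τ.Leaf n → ∀ q D, (q, D) ∈ ρ.G n → q ∈ M.F

def Run.FiniteRun {M : ATRA A} {τ : DataTree A} (ρ : M.Run τ) : Prop :=
  ∃ l : ℕ, ∀ n : Node, l ≤ n.length → ρ.G n = ∅

/-- The language of `M` over finite data trees. -/
def Lfin (M : ATRA A) : Set (DataTree A) :=
  {τ | τ.Finite ∧ ∃ ρ : M.Run τ, ρ.Final}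

/-- The safety language of `M`: data trees on which `M` has a final run. -/
def Lsaf (M : ATRA A) : Set (DataTree A) :=
  {τ | ∃ ρ : M.Run τ, ρ.Final}

/-- The co-safety language of `M`: data trees on which `M` has a final finite run. -/
def Lcos (M : ATRA A) : Set (DataTree A) :=
  {τ | ∃ ρ : M.Run τ, ρ.Final ∧ ρ.FiniteRun}

/-- The dual automaton: final states complemented, transition formulae dualised. -/
def dual (M : ATRA A) : ATRA A :=
  ⟨M.Q, M.fin, M.qI, M.Fᶜ, fun q a b => (M.δ q a b).dual⟩

end ATRA

/-- A set of data trees is safety iff it is closed in the prefix metric: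
if every `l`-prefix of `τ` is shared with some member of `L`, then `τ ∈ L`. -/
def IsSafetyLang {A : Type} (L : Set (DataTree A)) : Prop :=
  ∀ τ : DataTree A, (∀ l : ℕ, 0 < l → ∃ τ' ∈ L, EqPrefix τ τ' l) → τ ∈ L

/-!
Suppose that for each `l` some tree with the same `l`-prefix as `τ` has a final run `ρ l`, and let
`U` be a nonprincipal ultrafilter on `ℕ`. Put a thread into the limit configuration at `n` if it
belongs to `(ρ l).G n` for `U`-almost all `l`. Satisfaction of positive Boolean formulae commutes
with ultralimits, so the limit configurations satisfy the transition relation of `τ`. They may fail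
to be finite, but discarding the threads whose datum does not occur on the path from the root to
`n` preserves transitions and leaves only finitely many threads. This gives a final run on `τ`.

A finite run of depth `l` inspects only the `l`-prefix of its tree, whence co-safety.
-/

namespace PosBool
open Filter

variable {Q : Type}

theorem Sat.mono {R S : Bool → Bool → Set Q} (h : ∀ d u, R d u ⊆ S d u) {φ : PosBool Q}
    (hφ : φ.Sat R) : φ.Sat S := by
  induction φ with
  | atom q d u => exact h d u hφ
  | tt => trivial
  | ff => exact hφ
  | and φ ψ ihφ ihψ => exact hφ.imp ihφ ihψ
  | or φ ψ ihφ ihψ => exact hφ.imp ihφ ihψ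

theorem sat_liminf_iff {ι : Type*} (U : Ultrafilter ι) (R : ι → Bool → Bool → Set Q)
    (φ : PosBool Q) :
    φ.Sat (fun d u => liminf (fun i => R i d u) U) ↔ ∀ᶠ i in (U : Filter ι), φ.Sat (R i) := by
  induction φ with
  | atom q d u => exact mem_liminf_iff_eventually_mem
  | tt => simp only [Sat, eventually_true]
  | ff => simp only [Sat, eventually_const]
  | and φ ψ ihφ ihψ => simp only [Sat, ihφ, ihψ, eventually_and]
  | or φ ψ ihφ ihψ => simp only [Sat, ihφ, ihψ, Ultrafilter.eventually_or]

end PosBool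

namespace EqPrefix

variable {A : Type} {τ τ' : DataTree A} {k l : ℕ} {n : Node}

theorem mono (h : EqPrefix τ τ' l) (hkl : k ≤ l) : EqPrefix τ τ' k :=
  fun n hn => h n (hn.trans_le hkl)

theorem nonleaf_iff (h : EqPrefix τ τ' l) (hn : n.length < l) : τ.Nonleaf n ↔ τ'.Nonleaf n := by
  simp only [DataTree.Nonleaf, (h n hn).1]

theorem mem_nodes_iff (h : EqPrefix τ τ' l) (hn : n.length ≤ l) :
    n ∈ τ.Nodes ↔ n ∈ τ'.Nodes := by
  have nonleaf_parent (m : Node) (d : Bool) (hm : n = m ++ [d]) :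
      τ.Nonleaf m ↔ τ'.Nonleaf m := by
    have hlen : n.length = m.length + 1 := by rw [hm, List.length_append, List.length_singleton]
    exact h.nonleaf_iff (by omega)
  exact or_congr_right <| exists₂_congr fun m d => and_congr_right (nonleaf_parent m d)

theorem leaf_iff (h : EqPrefix τ τ' l) (hn : n.length < l) : τ.Leaf n ↔ τ'.Leaf n :=
  and_congr (h.mem_nodes_iff hn.le) (not_congr (h.nonleaf_iff hn))

end EqPrefix

namespace DataTree
open Filter

variable {A : Type}

theorem exists_dlabel_root (τ : DataTree A) : ∃ D, τ.dlabel [] = some D :=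
  Option.isSome_iff_exists.1 ((τ.domain_eq []).2 τ.root_nonleaf)

/-- The data occurring on the path from the root to `n`, both ends included. -/
def pathData (τ : DataTree A) (n : Node) : Set ℕ :=
  {D | ∃ m, m <+: n ∧ τ.dlabel m = some D}

theorem finite_pathData (τ : DataTree A) (n : Node) : (τ.pathData n).Finite := by
  simpa only [List.mem_filterMap, List.mem_inits] using!
    List.finite_toSet (n.inits.filterMap τ.dlabel)

theorem mem_pathData_self {τ : DataTree A} {n : Node} {D : ℕ} (h : τ.dlabel n = some D) :
    D ∈ τ.pathData n :=
  ⟨n, List.prefix_rfl, h⟩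

theorem pathData_subset_of_prefix (τ : DataTree A) {m n : Node} (h : m <+: n) :
    τ.pathData m ⊆ τ.pathData n :=
  fun _ ⟨k, hk, hD⟩ => ⟨k, hk.trans h, hD⟩

/-- Convergence of a family of data trees along a filter, in the prefix metric: each prefix of `τ`
is eventually shared by `T i`. -/
def PrefixTendsto {ι : Type*} (T : ι → DataTree A) (f : Filter ι) (τ : DataTree A) : Prop :=
  ∀ l, ∀ᶠ i in f, EqPrefix τ (T i) l

theorem PrefixTendsto.mono_left {ι : Type*} {T : ι → DataTree A} {f g : Filter ι}
    {τ : DataTree A} (h : PrefixTendsto T f τ) (hgf : g ≤ f) : PrefixTendsto T g τ :=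
  fun l => (h l).filter_mono hgf

theorem exists_seq_prefixTendsto {L : Set (DataTree A)} {τ : DataTree A}
    (h : ∀ l : ℕ, 0 < l → ∃ τ' ∈ L, EqPrefix τ τ' l) :
    ∃ T : ℕ → DataTree A, (∀ i, T i ∈ L) ∧ PrefixTendsto T atTop τ := by
  choose T hTL hT using fun i : ℕ => h (i + 1) i.succ_pos
  refine ⟨T, hTL, fun l => ?_⟩
  filter_upwards [eventually_ge_atTop l] with i hi
  exact (hT i).mono (hi.trans i.le_succ)

end DataTree

theorem isSafetyLang_compl_iff {A : Type} {L : Set (DataTree A)} :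
    IsSafetyLang Lᶜ ↔ ∀ τ ∈ L, ∃ l > 0, ∀ τ', EqPrefix τ τ' l → τ' ∈ L := by
  refine forall_congr' fun τ => ?_
  rw [← not_imp_not]
  simp only [Set.mem_compl_iff, not_not, not_forall, not_exists, not_and, exists_prop, gt_iff_lt,
    not_imp_not]

namespace ATRA
open Filter

variable {A : Type} {M : ATRA A}

section Trans

variable {a : A} {E : ℕ}

/- The successors required by a thread with datum `D` depend monotonically on the quadruple, so it
suffices to test the largest quadruple that fits into the successor configurations. -/
theorem trans_iff_sat {G : Set (M.Q × ℕ)} {H : Bool → Set (M.Q × ℕ)} :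
    M.Trans a E G (H false) (H true) ↔
      ∀ q D, (q, D) ∈ G →
        (M.δ q a (decide (D = E))).Sat fun d u => {r | (r, if u then E else D) ∈ H d} := by
  refine ⟨fun h q D hG => ?_, fun h q D hG => ⟨_, h q D hG, ?_⟩⟩
  · obtain ⟨R, hsat, hR⟩ := h q D hG
    refine hsat.mono fun d u r hr => ?_
    cases d <;> cases u
    exacts [(hR false).2 r hr, (hR false).1 r hr, (hR true).2 r hr, (hR true).1 r hr]
  · rintro (_ | _) <;> exact ⟨fun _ hr => hr, fun _ hr => hr⟩

theorem Trans.inter_preimage_snd {G : Set (M.Q × ℕ)} {H : Bool → Set (M.Q × ℕ)} {S : Set ℕ}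
    {S' : Bool → Set ℕ} (h : M.Trans a E G (H false) (H true)) (hS : ∀ d, S ⊆ S' d)
    (hE : ∀ d, E ∈ S' d) :
    M.Trans a E (G ∩ Prod.snd ⁻¹' S) (H false ∩ Prod.snd ⁻¹' S' false)
      (H true ∩ Prod.snd ⁻¹' S' true) := by
  refine (trans_iff_sat (H := fun d => H d ∩ Prod.snd ⁻¹' S' d)).2 ?_
  rintro q D ⟨hG, hD⟩
  refine (trans_iff_sat.1 h q D hG).mono fun d u r hr => ?_
  refine ⟨hr, ?_⟩
  cases u
  exacts [hS d hD, hE d]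

theorem Trans.ultralimit {ι : Type*} {U : Ultrafilter ι} {G : ι → Set (M.Q × ℕ)}
    {H : ι → Bool → Set (M.Q × ℕ)}
    (h : ∀ᶠ i in (U : Filter ι), M.Trans a E (G i) (H i false) (H i true)) :
    M.Trans a E (liminf G U) (liminf (fun i => H i false) U) (liminf (fun i => H i true) U) := by
  refine (trans_iff_sat (H := fun d => liminf (fun i => H i d) U)).2 fun q D hG => ?_
  have hsat : ∀ᶠ i in (U : Filter ι), (M.δ q a (decide (D = E))).Sat
      fun d u => {r | (r, if u then E else D) ∈ H i d} := by
    filter_upwards [h, mem_liminf_iff_eventually_mem.1 hG] with i hi hGi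
    exact trans_iff_sat.1 hi q D hGi
  refine ((PosBool.sat_liminf_iff U _ _).2 hsat).mono fun d u r hr => ?_
  rw [mem_liminf_iff_eventually_mem] at hr
  exact mem_liminf_iff_eventually_mem.2 hr

end Trans

namespace Run

theorem qI_mem {τ : DataTree A} (ρ : M.Run τ) {D : ℕ} (hD : τ.dlabel [] = some D) :
    (M.qI, D) ∈ ρ.G [] := by
  obtain ⟨D', hD', hmem⟩ := ρ.init
  rwa [Option.some.inj (hD.symm.trans hD')]

section Limit

variable {ι : Type*} {U : Ultrafilter ι} {T : ι → DataTree A} {τ : DataTree A}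

/-- The ultralimit of runs on data trees converging to `τ`. The limit configuration at `n` is
restricted to threads with data from the path to `n`, so as to be finite. -/
def ultralimit (ρ : ∀ i, M.Run (T i)) (hT : DataTree.PrefixTendsto T U τ) : M.Run τ where
  G n := liminf (fun i => (ρ i).G n) U ∩ Prod.snd ⁻¹' τ.pathData n
  finite n := by
    have := M.fin
    refine (Set.finite_univ.prod (τ.finite_pathData n)).subset ?_
    exact fun p hp => ⟨trivial, hp.2⟩
  support n hn := by
    have hempty : ∀ᶠ i in (U : Filter ι), (ρ i).G n = ∅ := by
      filter_upwards [hT n.length] with i hi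
      exact (ρ i).support n (mt (hi.mem_nodes_iff le_rfl).2 hn)
    rw [liminf_congr hempty, liminf_const, Set.empty_inter]
  init := by
    obtain ⟨D, hD⟩ := τ.exists_dlabel_root
    refine ⟨D, hD, mem_liminf_iff_eventually_mem.2 ?_, DataTree.mem_pathData_self hD⟩
    filter_upwards [hT 1] with i hi
    exact (ρ i).qI_mem ((hi [] Nat.one_pos).2 ▸ hD)
  step n a E ha hE := by
    have hstep : ∀ᶠ i in (U : Filter ι),
        M.Trans a E ((ρ i).G n) ((ρ i).G (n ++ [false])) ((ρ i).G (n ++ [true])) := by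
      filter_upwards [hT (n.length + 1)] with i hi
      obtain ⟨hlabel, hdlabel⟩ := hi n n.length.lt_succ_self
      exact (ρ i).step n a E (hlabel ▸ ha) (hdlabel ▸ hE)
    have hpath (d : Bool) : τ.pathData n ⊆ τ.pathData (n ++ [d]) :=
      τ.pathData_subset_of_prefix (List.prefix_append n [d])
    exact (Trans.ultralimit (H := fun i d => (ρ i).G (n ++ [d])) hstep).inter_preimage_snd
      (H := fun d => liminf (fun i => (ρ i).G (n ++ [d])) U) (S' := fun d => τ.pathData (n ++ [d]))
      hpath fun d => hpath d (DataTree.mem_pathData_self hE)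

theorem Final.ultralimit {ρ : ∀ i, M.Run (T i)} (hρ : ∀ᶠ i in (U : Filter ι), (ρ i).Final)
    (hT : DataTree.PrefixTendsto T U τ) : (ultralimit ρ hT).Final := by
  rintro n hn q D ⟨hmem, -⟩
  obtain ⟨i, hfinal, hi, hq⟩ :=
    (hρ.and ((hT (n.length + 1)).and (mem_liminf_iff_eventually_mem.1 hmem))).exists
  exact hfinal n ((hi.leaf_iff n.length.lt_succ_self).1 hn) q D hq

end Limit

section Transfer

variable {τ τ' : DataTree A} {l : ℕ} {ρ : M.Run τ}

theorem length_lt_of_mem (hl : ∀ n : Node, l ≤ n.length → ρ.G n = ∅) {n : Node}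
    {p : M.Q × ℕ} (hp : p ∈ ρ.G n) : n.length < l := by
  by_contra! hn
  exact Set.notMem_empty p (hl n hn ▸ hp)

theorem pos_of_forall_eq_empty (hl : ∀ n : Node, l ≤ n.length → ρ.G n = ∅) : 0 < l := by
  obtain ⟨D, -, hD⟩ := ρ.init
  exact length_lt_of_mem hl hD

/-- A run whose configurations at depth `l` and below are empty, regarded as a run on another data
tree with the same `l`-prefix. -/
def transfer (ρ : M.Run τ) (hl : ∀ n : Node, l ≤ n.length → ρ.G n = ∅) (h : EqPrefix τ τ' l) :
    M.Run τ' where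
  G := ρ.G
  finite := ρ.finite
  support n hn := by
    rcases le_total l n.length with hln | hnl
    · exact hl n hln
    · exact ρ.support n (mt (h.mem_nodes_iff hnl).1 hn)
  init := by
    obtain ⟨D, hD, hmem⟩ := ρ.init
    exact ⟨D, (h [] (length_lt_of_mem hl hmem)).2 ▸ hD, hmem⟩
  step n a D ha hD q D' hmem := by
    obtain ⟨hlabel, hdlabel⟩ := h n (length_lt_of_mem hl hmem)
    exact ρ.step n a D (hlabel.trans ha) (hdlabel.trans hD) q D' hmem

theorem Final.transfer (hρ : ρ.Final) (hl : ∀ n : Node, l ≤ n.length → ρ.G n = ∅)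
    (h : EqPrefix τ τ' l) : (ρ.transfer hl h).Final :=
  fun n hn q D hmem => hρ n ((h.leaf_iff (length_lt_of_mem hl hmem)).2 hn) q D hmem

end Transfer

end Run

theorem mem_lsaf_of_prefixTendsto {ι : Type*} {U : Ultrafilter ι} {T : ι → DataTree A}
    {τ : DataTree A} (hT : DataTree.PrefixTendsto T U τ) (hmem : ∀ i, T i ∈ M.Lsaf) :
    τ ∈ M.Lsaf := by
  choose ρ hρ using hmem
  exact ⟨Run.ultralimit ρ hT, Run.Final.ultralimit (.of_forall hρ) hT⟩

theorem isSafetyLang_lsaf (M : ATRA A) : IsSafetyLang M.Lsaf := by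
  intro τ hτ
  obtain ⟨T, hmem, hT⟩ := DataTree.exists_seq_prefixTendsto hτ
  exact mem_lsaf_of_prefixTendsto (hT.mono_left Nat.hyperfilter_le_atTop) hmem

theorem isSafetyLang_compl_lcos (M : ATRA A) : IsSafetyLang M.Lcosᶜ := by
  refine isSafetyLang_compl_iff.2 ?_
  rintro τ ⟨ρ, hρ, l, hl⟩
  exact ⟨l, Run.pos_of_forall_eq_empty hl, fun τ' h => ⟨ρ.transfer hl h, hρ.transfer hl h, l, hl⟩⟩

end ATRA

theorem atra_saf_safety_cos_cosafety_general {A : Type} (M : ATRA A) :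
    IsSafetyLang M.Lsaf ∧ IsSafetyLang M.Lcosᶜ :=
  ⟨M.isSafetyLang_lsaf, M.isSafetyLang_compl_lcos⟩

/-- For every ATRA₁, `L^saf(𝒜)` is a safety language (closed)
and `L^cos(𝒜)` is a co-safety language (its complement is a safety language). -/
theorem atra_saf_safety_cos_cosafety {A : Type} [Fintype A] (M : ATRA A) :
    IsSafetyLang M.Lsaf ∧ IsSafetyLang M.Lcosᶜ := by
  exact atra_saf_safety_cos_cosafety_general M
end

section
/- For every ITCA 𝒞, the set of levels 𝒢 from which there exists an infinite sequence of level transitions 𝒢 = 𝒢₀ → 𝒢₁ → 𝒢₂ → ⋯ is downward closed with respect to ≼: if ℋ admits such an infinite sequence and 𝒢 ≼ ℋ, then 𝒢 also admits such an infinite sequence. -/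
/-! ## Counters with incrementing errors -/

/-- A counter valuation on `k` counters. -/
abbrev Val (k : ℕ) : Type := Fin k → ℕ

/-- Pointwise order on counter valuations. -/
def ValLE {k : ℕ} (v w : Val k) : Prop := ∀ c, v c ≤ w c

/-- Instructions over `k` counters: increment, decrement, zero-test. -/
inductive Instr (k : ℕ) : Type
  | inc : Fin k → Instr k
  | dec : Fin k → Instr k
  | ifz : Fin k → Instr k

/-- Error-free steps. -/
def StepExact {k : ℕ} : Instr k → Val k → Val k → Prop
  | .inc c, v, v' => v' = Function.update v c (v c + 1)
  | .dec c, v, v' => 0 < v c ∧ v' = Function.update v c (v c - 1)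
  | .ifz c, v, v' => v c = 0 ∧ v' = v

/-- Steps with incrementing errors. -/
def StepErr {k : ℕ} (l : Instr k) (v v' : Val k) : Prop :=
  ∃ vs vs', ValLE v vs ∧ StepExact l vs vs' ∧ ValLE vs' v'

/-- Lazy steps: either error-free, or a decrement of `0` erroneously yields `0`. -/
def StepLazy {k : ℕ} (l : Instr k) (v v' : Val k) : Prop :=
  StepExact l v v' ∨ ∃ c, l = Instr.dec c ∧ v c = 0 ∧ v' = v

/-! ## Incrementing tree counter automata (ITCA) -/

/-- A forward incrementing tree counter automaton with ε-transitions. -/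
structure ITCA (A : Type) where
  Q : Type
  fin : Finite Q
  qI : Q
  F : Set Q
  k : ℕ
  δ : Set (Q × A × Instr k × Q × Q)
  δε : Set (Q × Instr k × Q)

namespace ITCA
variable {A : Type}

/-- A run of `C` on a finite tree: a block (nonempty sequence of configurations,
consecutive ones related by ε-transitions with incrementing errors) at each node. -/
structure Run (C : ITCA A) (t : BTree A) where
  B : Node → List (C.Q × Val C.k)
  nonempty : ∀ n ∈ t.Nodes, B n ≠ []
  block : ∀ n ∈ t.Nodes,
    List.Chain' (fun x y => ∃ l, (x.1, l, y.1) ∈ C.δε ∧ StepErr l x.2 y.2) (B n)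
  init : (B []).head? = some (C.qI, fun _ => 0)
  step : ∀ (n : Node) (a : A), t.label n = some a →
    ∃ q v l r0 r1 w0 w1,
      (B n).getLast? = some (q, v) ∧
      (q, a, l, r0, r1) ∈ C.δ ∧
      StepErr l v w0 ∧ StepErr l v w1 ∧
      (B (n ++ [false])).head? = some (r0, w0) ∧
      (B (n ++ [true])).head? = some (r1, w1)

def Run.Accepting {C : ITCA A} {t : BTree A} (ρ : C.Run t) : Prop :=
  ∀ n, t.Leaf n → ∀ q v, (ρ.B n).getLast? = some (q, v) → q ∈ C.F

/-- The language of `C`: finite trees on which `C` has an accepting run. -/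
def Lang (C : ITCA A) : Set (BTree A) :=
  {t | t.Finite ∧ ∃ ρ : C.Run t, ρ.Accepting}

/-- The transition relation between levels (finite sets of configurations):
each non-final configuration is replaced by the configuration(s) some firable
transition yields lazily, and final configurations are removed. -/
def LevelStep (C : ITCA A) (G G' : Set (C.Q × Val C.k)) : Prop :=
  ∃ f : C.Q × Val C.k → Set (C.Q × Val C.k),
    (∀ x ∈ G, x.1 ∉ C.F →
      (∃ a l r0 r1 w0 w1, (x.1, a, l, r0, r1) ∈ C.δ ∧
        StepLazy l x.2 w0 ∧ StepLazy l x.2 w1 ∧ f x = {(r0, w0), (r1, w1)}) ∨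
      (∃ l r w, (x.1, l, r) ∈ C.δε ∧ StepLazy l x.2 w ∧ f x = {(r, w)})) ∧
    G' = ⋃ x ∈ {y ∈ G | y.1 ∉ C.F}, f x

end ITCA

/-- The quasi-order on levels: each configuration of `G` is dominated
(same state, pointwise smaller-or-equal valuation) by some configuration of `H`. -/
def LevelLE {Q : Type} {k : ℕ} (G H : Set (Q × Val k)) : Prop :=
  ∀ x ∈ G, ∃ y ∈ H, x.1 = y.1 ∧ ValLE x.2 y.2

/-! Whatever a valuation can fire, every smaller one can fire too: increments are always enabled, a
successful zero test stays successful when the counters shrink, and a lazy decrement is always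
enabled, being the truncated subtraction `n ↦ n - 1`. All three effects are monotone, so `≼`
is a simulation: a level that dominates a terminating level is itself terminating. -/

section Simulation

variable {α β : Type*} {r : α → α → Prop} {s : β → β → Prop} {R : α → β → Prop}

theorem acc_of_simulation
    (hR : ∀ ⦃a b b'⦄, R a b → s b b' → ∃ a', r a a' ∧ R a' b')
    {a : α} {b : β} (ha : Acc (flip r) a) (hab : R a b) : Acc (flip s) b := by
  induction ha generalizing b with
  | intro a _ ih =>
    refine .intro b fun b' hb' => ?_
    obtain ⟨a', ha', hab'⟩ := hR hab hb'
    exact ih a' ha' hab'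

theorem exists_infinite_chain_of_simulation
    (hR : ∀ ⦃a b b'⦄, R a b → s b b' → ∃ a', r a a' ∧ R a' b')
    {a : α} {u : ℕ → β} (hab : R a (u 0)) (hu : ∀ i, s (u i) (u (i + 1))) :
    ∃ t : ℕ → α, t 0 = a ∧ ∀ i, r (t i) (t (i + 1)) := by
  have not_acc_u : ¬ Acc (flip s) (u 0) := not_acc_iff_exists_descending_chain.2 ⟨u, rfl, hu⟩
  exact not_acc_iff_exists_descending_chain.1 fun ha => not_acc_u (acc_of_simulation hR ha hab)

end Simulation

section Counters

variable {k : ℕ} {v w : Val k}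

theorem stepLazy_inc_iff {c : Fin k} :
    StepLazy (.inc c) v w ↔ w = Function.update v c (v c + 1) := by
  simp [StepLazy, StepExact]

theorem stepLazy_dec_iff {c : Fin k} :
    StepLazy (.dec c) v w ↔ w = Function.update v c (v c - 1) := by
  rcases Nat.eq_zero_or_pos (v c) with hv | hv
  · have update_eq : Function.update v c (v c - 1) = v := by simp [hv]
    rw [update_eq]
    simp [StepLazy, StepExact, hv]
  · simp [StepLazy, StepExact, hv, hv.ne']

theorem stepLazy_ifz_iff {c : Fin k} : StepLazy (.ifz c) v w ↔ v c = 0 ∧ w = v := by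
  simp [StepLazy, StepExact]

theorem ValLE.update_of_monotone {f : ℕ → ℕ} (hf : Monotone f) (h : ValLE v w) (c : Fin k) :
    ValLE (Function.update v c (f (v c))) (Function.update w c (f (w c))) :=
  update_le_update_iff.2 ⟨hf (h c), fun d _ => h d⟩

theorem StepLazy.exists_valLE {l : Instr k} {w' : Val k} (h : StepLazy l w w') (hvw : ValLE v w) :
    ∃ v', StepLazy l v v' ∧ ValLE v' w' := by
  cases l with
  | inc c =>
    obtain rfl := stepLazy_inc_iff.1 h
    exact ⟨_, stepLazy_inc_iff.2 rfl, hvw.update_of_monotone Order.succ_mono c⟩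
  | dec c =>
    obtain rfl := stepLazy_dec_iff.1 h
    exact ⟨_, stepLazy_dec_iff.2 rfl, hvw.update_of_monotone Order.pred_mono c⟩
  | ifz c =>
    obtain ⟨hw, rfl⟩ := stepLazy_ifz_iff.1 h
    exact ⟨v, stepLazy_ifz_iff.2 ⟨Nat.eq_zero_of_le_zero (hw ▸ hvw c), rfl⟩, hvw⟩

end Counters

namespace ITCA

variable {A : Type} {C : ITCA A}

/-- `C.Fires x S`: some transition of `C` enabled at the configuration `x` lazily replaces it by
the configurations in `S`. Whether the state of `x` is final is not taken into account. -/
def Fires (C : ITCA A) (x : C.Q × Val C.k) (S : Set (C.Q × Val C.k)) : Prop :=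
  (∃ a l r₀ r₁ w₀ w₁, (x.1, a, l, r₀, r₁) ∈ C.δ ∧
    StepLazy l x.2 w₀ ∧ StepLazy l x.2 w₁ ∧ S = {(r₀, w₀), (r₁, w₁)}) ∨
  (∃ l r w, (x.1, l, r) ∈ C.δε ∧ StepLazy l x.2 w ∧ S = {(r, w)})

theorem levelStep_iff {G G' : Set (C.Q × Val C.k)} :
    C.LevelStep G G' ↔ ∃ f : C.Q × Val C.k → Set (C.Q × Val C.k),
      (∀ x ∈ G, x.1 ∉ C.F → C.Fires x (f x)) ∧ G' = ⋃ x ∈ {y ∈ G | y.1 ∉ C.F}, f x :=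
  Iff.rfl

theorem Fires.exists_levelLE {q : C.Q} {v w : Val C.k} {T : Set (C.Q × Val C.k)}
    (h : C.Fires (q, w) T) (hvw : ValLE v w) : ∃ S, C.Fires (q, v) S ∧ LevelLE S T := by
  rcases h with ⟨a, l, r₀, r₁, w₀, w₁, hδ, hw₀, hw₁, rfl⟩ | ⟨l, r, w', hδ, hw', rfl⟩
  · obtain ⟨v₀, hv₀, hle₀⟩ := hw₀.exists_valLE hvw
    obtain ⟨v₁, hv₁, hle₁⟩ := hw₁.exists_valLE hvw
    refine ⟨{(r₀, v₀), (r₁, v₁)}, .inl ⟨a, l, r₀, r₁, v₀, v₁, hδ, hv₀, hv₁, rfl⟩, ?_⟩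
    rintro _ (rfl | rfl)
    · exact ⟨(r₀, w₀), .inl rfl, rfl, hle₀⟩
    · exact ⟨(r₁, w₁), .inr rfl, rfl, hle₁⟩
  · obtain ⟨v', hv', hle⟩ := hw'.exists_valLE hvw
    refine ⟨{(r, v')}, .inr ⟨l, r, v', hδ, hv', rfl⟩, ?_⟩
    rintro _ rfl
    exact ⟨(r, w'), rfl, rfl, hle⟩

theorem LevelStep.exists_levelLE {G H H' : Set (C.Q × Val C.k)}
    (h : C.LevelStep H H') (hle : LevelLE G H) : ∃ G', C.LevelStep G G' ∧ LevelLE G' H' := by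
  obtain ⟨f, hf, rfl⟩ := levelStep_iff.1 h
  have fires_below : ∀ x ∈ G, x.1 ∉ C.F → ∃ S, C.Fires x S ∧
      LevelLE S (⋃ y ∈ {y ∈ H | y.1 ∉ C.F}, f y) := by
    rintro ⟨q, v⟩ hx hq
    obtain ⟨⟨_, w⟩, hy, rfl, hvw⟩ := hle _ hx
    obtain ⟨S, hS, hSf⟩ := (hf _ hy hq).exists_levelLE hvw
    refine ⟨S, hS, fun z hz => ?_⟩
    obtain ⟨z', hz', hzz'⟩ := hSf z hz
    exact ⟨z', Set.mem_biUnion (show _ ∈ {y ∈ H | y.1 ∉ C.F} from ⟨hy, hq⟩) hz', hzz'⟩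
  choose! g hg hgf using fires_below
  refine ⟨_, levelStep_iff.2 ⟨g, hg, rfl⟩, fun z hz => ?_⟩
  obtain ⟨x, ⟨hx, hq⟩, hzx⟩ := Set.mem_iUnion₂.1 hz
  exact hgf x hx hq z hzx

end ITCA

theorem levelstep_infinite_downward_closed_general {A : Type} (C : ITCA A)
    (G H : Set (C.Q × Val C.k)) (hle : LevelLE G H)
    (seq : ℕ → Set (C.Q × Val C.k))
    (h0 : seq 0 = H) (hstep : ∀ i, C.LevelStep (seq i) (seq (i + 1))) :
    ∃ seq' : ℕ → Set (C.Q × Val C.k),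
      seq' 0 = G ∧ ∀ i, C.LevelStep (seq' i) (seq' (i + 1)) := by
  subst h0
  exact exists_infinite_chain_of_simulation (fun _ _ _ h hs => hs.exists_levelLE h) hle hstep

/-- The set of levels admitting an infinite sequence of level
transitions is downward closed with respect to `≼`. -/
theorem levelstep_infinite_downward_closed {A : Type} [Fintype A] (C : ITCA A)
    (G H : Set (C.Q × Val C.k)) (hG : G.Finite) (hH : H.Finite)
    (hle : LevelLE G H)
    (seq : ℕ → Set (C.Q × Val C.k))
    (h0 : seq 0 = H) (hstep : ∀ i, C.LevelStep (seq i) (seq (i + 1))) :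
    ∃ seq' : ℕ → Set (C.Q × Val C.k),
      seq' 0 = G ∧ ∀ i, C.LevelStep (seq' i) (seq' (i + 1)) := by
  exact levelstep_infinite_downward_closed_general C G H hle seq h0 hstep
end
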